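/- arXiv:1801.07179 — 2 statements merged into one kernel-verified Lean document; each statement's English description precedes it below -/
import Mathlib

section
/- Every Newman quadrinomial Q(X) = X^a + X^b + X^c + 1 with integers 0 < c < b < a ≤ 14 divides some Littlewood polynomial of degree exactly m(Q) − 1, and Q divides no Littlewood polynomial of degree less than m(Q) − 1; that is, m(Q) − 1 is the smallest possible degree of a Littlewood multiple of Q. -/
open Polynomial

/-- A Littlewood polynomial: a nonzero integer polynomial all of whose
coefficients (up to its degree) are `-1` or `1`. -/
def IsLittlewood (P : Polynomial ℤ) : Prop :=
  P ≠ 0 ∧ ∀ i ≤ P.natDegree, P.coeff i = 1 ∨ P.coeff i = -1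

/-- For `P ∈ ℤ[X]`, `mdeg P` is the least positive integer `m` such that
`(X + 1) * P̄` divides `X ^ m - 1` in `𝔽₂[X]`, where `P̄` is the reduction of
`P` modulo `2` (and `0` if no such `m` exists). -/
noncomputable def mdeg (P : Polynomial ℤ) : ℕ :=
  sInf {m : ℕ | 0 < m ∧
    (X + 1) * P.map (Int.castRingHom (ZMod 2)) ∣ X ^ m - 1}

/-!
Modulo two, a Littlewood polynomial of degree `n` is `(X ^ (n + 1) - 1) / (X + 1)`; this gives the
lower bound `mdeg Q - 1` for the degree of a Littlewood multiple of `Q`.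

Conversely, let `Q` be a quadrinomial, `m = mdeg Q`, and let `T ∈ ℤ[X]` have coefficients in
`{-1, 0, 1}` and reduce to `(X ^ m - 1) / ((X + 1) * Q)` modulo two. Then `Q * T` has degree
`m - 1`, and each of its `m` coefficients is a sum of one or three signs, so `Q * T` is Littlewood
as soon as no three signs that meet in a coefficient are equal. Suitable signs are found by local
search: as long as some coefficients are `±3`, flip one of the three signs in each of them. The
value of `m` is confirmed by the absence of `deg Q` consecutive even coefficients in `T`, since a
smaller period `k` would make the coefficients number `k - deg Q, …, k - 1` of `T` even.
-/

namespace IsLittlewood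

variable {L Q : ℤ[X]}

lemma map_castRingHom_zmod_two (hL : IsLittlewood L) :
    L.map (Int.castRingHom (ZMod 2)) = ∑ i ∈ Finset.range (L.natDegree + 1), X ^ i := by
  ext i
  simp only [coeff_map, finsetSum_coeff, coeff_X_pow, Finset.sum_ite_eq, Finset.mem_range]
  split_ifs with hi
  · rcases hL.2 i (by omega) with h | h <;> rw [h] <;> decide
  · rw [coeff_eq_zero_of_natDegree_lt (by omega), map_zero]

lemma X_add_one_mul_map (hL : IsLittlewood L) :
    (X + 1) * L.map (Int.castRingHom (ZMod 2)) = X ^ (L.natDegree + 1) - 1 := by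
  rw [hL.map_castRingHom_zmod_two, ← CharTwo.sub_eq_add, mul_geom_sum]

lemma X_add_one_mul_map_dvd (hL : IsLittlewood L) (hQ : Q ∣ L) :
    (X + 1) * Q.map (Int.castRingHom (ZMod 2)) ∣ X ^ (L.natDegree + 1) - 1 := by
  rw [← hL.X_add_one_mul_map]
  exact mul_dvd_mul_left _ (Polynomial.map_dvd _ hQ)

lemma mdeg_le (hL : IsLittlewood L) (hQ : Q ∣ L) : mdeg Q ≤ L.natDegree + 1 :=
  Nat.sInf_le ⟨Nat.succ_pos _, hL.X_add_one_mul_map_dvd hQ⟩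

end IsLittlewood

lemma isLittlewood_and_natDegree_eq_of_coeff {P : ℤ[X]} {n : ℕ}
    (hsign : ∀ i ≤ n, P.coeff i = 1 ∨ P.coeff i = -1) (hzero : ∀ i, n < i → P.coeff i = 0) :
    IsLittlewood P ∧ P.natDegree = n := by
  have hlead : P.coeff n ≠ 0 := by
    rcases hsign n le_rfl with h | h <;> rw [h] <;> decide
  have hdeg : P.natDegree = n :=
    le_antisymm (natDegree_le_iff_coeff_eq_zero.2 hzero) (le_natDegree_of_ne_zero hlead)
  exact ⟨⟨fun h => hlead (by rw [h, coeff_zero]), hdeg ▸ hsign⟩, hdeg⟩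

lemma coeff_eq_zero_of_dvd_X_pow_sub_one {R : Type*} [CommRing R] {F U : R[X]} {k m i : ℕ}
    (hF : F.Monic) (hU : F * U = X ^ m - 1) (hk : F ∣ X ^ k - 1) (hkm : k < m) (hik : i < k)
    (hki : k < i + F.natDegree) : U.coeff i = 0 := by
  nontriviality R
  obtain ⟨S, hS⟩ := hk
  have hmonic : (X ^ k - 1 : R[X]).Monic := monic_X_pow_sub_C 1 (by omega)
  have hdeg : F.natDegree + S.natDegree = k := by
    rw [← hF.natDegree_mul (hF.of_mul_monic_left (hS ▸ hmonic)), ← hS]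
    exact natDegree_X_pow_sub_C
  have hswap : U * X ^ k - U = S * X ^ m - S := by
    linear_combination U * hS + S * hU
  have hcoeff := congrArg (coeff · i) hswap
  simp only [coeff_sub, coeff_mul_X_pow'] at hcoeff
  rw [if_neg (by omega), if_neg (by omega), coeff_eq_zero_of_natDegree_lt (p := S) (by omega)]
    at hcoeff
  simpa using hcoeff

lemma IsLittlewood.mdeg_mul_left_eq {Q T : ℤ[X]} (hL : IsLittlewood (Q * T)) (hQ : Q.Monic)
    (hodd : ∀ j, j + Q.natDegree ≤ (Q * T).natDegree → ∃ d < Q.natDegree, Odd (T.coeff (j + d))) :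
    mdeg Q = (Q * T).natDegree + 1 := by
  set F : (ZMod 2)[X] := (X + 1) * Q.map (Int.castRingHom (ZMod 2)) with hF
  have hX : (X + 1 : (ZMod 2)[X]).Monic := monic_X_add_C 1
  have hFmonic : F.Monic := hX.mul (hQ.map _)
  have hFdeg : F.natDegree = Q.natDegree + 1 := by
    rw [hX.natDegree_mul (hQ.map _), hQ.natDegree_map, add_comm]
    exact congrArg _ (natDegree_X_add_C 1)
  have hU : F * T.map (Int.castRingHom (ZMod 2)) = X ^ ((Q * T).natDegree + 1) - 1 := by
    rw [hF, mul_assoc, ← Polynomial.map_mul, hL.X_add_one_mul_map]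
  refine le_antisymm (hL.mdeg_le (dvd_mul_right _ _))
    (le_csInf ⟨_, Nat.succ_pos _, hL.X_add_one_mul_map_dvd (dvd_mul_right _ _)⟩ ?_)
  rintro k ⟨hk, hdvd⟩
  by_contra! hlt
  have hdeg : F.natDegree ≤ k := by
    have hmonic : (X ^ k - 1 : (ZMod 2)[X]).Monic := monic_X_pow_sub_C 1 hk.ne'
    refine (natDegree_le_of_dvd hdvd hmonic.ne_zero).trans_eq ?_
    exact natDegree_X_pow_sub_C
  obtain ⟨d, hd, hTd⟩ := hodd (k - Q.natDegree) (by omega)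
  have hzero := coeff_eq_zero_of_dvd_X_pow_sub_one hFmonic hU hdvd hlt
    (i := k - Q.natDegree + d) (by omega) (by omega)
  rw [coeff_map, eq_intCast, ZMod.intCast_zmod_eq_zero_iff_dvd] at hzero
  exact Int.not_even_iff_odd.2 hTd (even_iff_two_dvd.2 hzero)

/-- The polynomial with coefficients `0` and `1` whose coefficients are the binary digits of `w`,
the lowest digit being the constant coefficient. -/
noncomputable def bitPoly (R : Type*) [Semiring R] (w : ℕ) : R[X] :=
  ∑ i ∈ w.bitIndices.toFinset, X ^ i

section BitPoly

variable {R : Type*} [Semiring R]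

lemma coeff_bitPoly (w i : ℕ) : (bitPoly R w).coeff i = (w.testBit i).toNat := by
  cases hi : w.testBit i <;> simp [bitPoly, coeff_X_pow, hi]

lemma X_pow_mul_bitPoly (k w : ℕ) : X ^ k * bitPoly R w = bitPoly R (w <<< k) := by
  ext i
  rw [coeff_X_pow_mul', coeff_bitPoly, coeff_bitPoly, Nat.testBit_shiftLeft]
  by_cases h : k ≤ i <;> simp [h]

end BitPoly

/-- The positions from which a run of `d` binary digits of `u` contains a nonzero digit, as the
nonzero digits of a number. -/
def nonzeroRuns (u : ℕ) : ℕ → ℕ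
  | 0 => 0
  | d + 1 => u ||| nonzeroRuns u d >>> 1

lemma testBit_nonzeroRuns (u d j : ℕ) :
    (nonzeroRuns u d).testBit j ↔ ∃ i < d, u.testBit (j + i) := by
  induction d generalizing j with
  | zero => simp [nonzeroRuns]
  | succ d ih =>
    simp only [nonzeroRuns, Nat.testBit_or, Nat.testBit_shiftRight, Bool.or_eq_true, ih,
      Nat.exists_lt_succ_left, add_zero, add_comm, add_left_comm]

/-- The quadrinomial `X ^ a + X ^ b + X ^ c + 1`, to which all definitions with parameters
`a b c` refer. -/
noncomputable def quadrinomial (a b c : ℕ) : ℤ[X] := X ^ a + X ^ b + X ^ c + 1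

section Quadrinomial

variable {a b c : ℕ}

lemma degree_quadrinomial_tail_lt (hcb : c < b) (hba : b < a) :
    (X ^ b + X ^ c + 1 : ℤ[X]).degree < a := by
  refine lt_of_le_of_lt (b := (b : WithBot ℕ)) ?_ (by exact_mod_cast hba)
  compute_degree
  simpa using ⟨le_rfl, Nat.cast_le.2 hcb.le⟩

lemma monic_quadrinomial (hcb : c < b) (hba : b < a) : (quadrinomial a b c).Monic := by
  simpa only [quadrinomial, add_assoc] using monic_X_pow_add (degree_quadrinomial_tail_lt hcb hba)

lemma natDegree_quadrinomial (hcb : c < b) (hba : b < a) : (quadrinomial a b c).natDegree = a := by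
  have htail := degree_quadrinomial_tail_lt hcb hba
  rw [quadrinomial, add_assoc, add_assoc, natDegree_add_eq_left_of_degree_lt, natDegree_X_pow]
  rwa [degree_X_pow, ← add_assoc]

end Quadrinomial

section Terms

variable (a b c : ℕ)

/-- The number of terms `X ^ i` in the expansion of `quadrinomial a b c * bitPoly ℤ w`. -/
def termCount (w i : ℕ) : ℕ :=
  (w.testBit i).toNat + ((w <<< c).testBit i).toNat + ((w <<< b).testBit i).toNat +
    ((w <<< a).testBit i).toNat

/-- The positions `i` at which `termCount a b c w i` is odd, as the nonzero binary digits of a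
number: this is the product of `quadrinomial a b c` and `w` over the field with two elements. -/
def oddTerms (w : ℕ) : ℕ := w ^^^ w <<< c ^^^ w <<< b ^^^ w <<< a

/-- The positions `i` at which `termCount a b c w i = 3`, as the nonzero binary digits of a
number. -/
def threeTerms (w : ℕ) : ℕ := oddTerms a b c w &&& (w &&& w <<< c ||| w <<< b &&& w <<< a)

variable {a b c}

lemma coeff_quadrinomial_mul_bitPoly (w i : ℕ) :
    (quadrinomial a b c * bitPoly ℤ w).coeff i = termCount a b c w i := by
  simp only [quadrinomial, add_mul, one_mul, X_pow_mul_bitPoly, coeff_add, coeff_bitPoly,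
    termCount, Nat.cast_add]
  ring

lemma testBit_oddTerms (w i : ℕ) :
    (oddTerms a b c w).testBit i ↔ Odd (termCount a b c w i) := by
  simp only [oddTerms, termCount, Nat.testBit_xor]
  generalize w.testBit i = x₀, (w <<< c).testBit i = x₁, (w <<< b).testBit i = x₂,
    (w <<< a).testBit i = x₃
  revert x₀ x₁ x₂ x₃
  decide

lemma testBit_threeTerms (w i : ℕ) :
    (threeTerms a b c w).testBit i ↔ termCount a b c w i = 3 := by
  simp only [threeTerms, oddTerms, termCount, Nat.testBit_xor, Nat.testBit_and, Nat.testBit_or]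
  generalize w.testBit i = x₀, (w <<< c).testBit i = x₁, (w <<< b).testBit i = x₂,
    (w <<< a).testBit i = x₃
  revert x₀ x₁ x₂ x₃
  decide

lemma termCount_le_four (w i : ℕ) : termCount a b c w i ≤ 4 := by
  grind [termCount, Bool.toNat_le]

lemma toNat_testBit_or {p n : ℕ} (hdisj : p &&& n = 0) (i : ℕ) :
    ((p ||| n).testBit i).toNat = (p.testBit i).toNat + (n.testBit i).toNat := by
  have hi : (p.testBit i && n.testBit i) = false := by
    rw [← Nat.testBit_and, hdisj, Nat.zero_testBit]
  rw [Nat.testBit_or]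
  revert hi
  cases p.testBit i <;> cases n.testBit i <;> decide

lemma termCount_or {p n : ℕ} (hdisj : p &&& n = 0) (i : ℕ) :
    termCount a b c (p ||| n) i = termCount a b c p i + termCount a b c n i := by
  have hshift (k : ℕ) : p <<< k &&& n <<< k = 0 := by
    rw [← Nat.shiftLeft_and_distrib, hdisj, Nat.zero_shiftLeft]
  simp only [termCount, Nat.shiftLeft_or_distrib, toNat_testBit_or hdisj,
    toNat_testBit_or (hshift _)]
  ring

end Terms

/-- The nonzero binary digits of `p` and `n` are the positions of the coefficients `1` and `-1` of
a polynomial `T` such that `quadrinomial a b c * T` is a Littlewood polynomial of degree `m - 1`,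
and no smaller degree is possible. -/
structure IsCertificate (a b c m p n : ℕ) : Prop where
  pos : 0 < m
  disjoint : p &&& n = 0
  oddTerms_or : oddTerms a b c (p ||| n) = 2 ^ m - 1
  threeTerms_left : threeTerms a b c p = 0
  threeTerms_right : threeTerms a b c n = 0
  nonzeroRuns_or : nonzeroRuns (p ||| n) a = 2 ^ (m - a) - 1

instance (a b c m p n : ℕ) : Decidable (IsCertificate a b c m p n) :=
  decidable_of_iff (0 < m ∧ p &&& n = 0 ∧ oddTerms a b c (p ||| n) = 2 ^ m - 1 ∧
      threeTerms a b c p = 0 ∧ threeTerms a b c n = 0 ∧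
      nonzeroRuns (p ||| n) a = 2 ^ (m - a) - 1)
    ⟨fun ⟨h₁, h₂, h₃, h₄, h₅, h₆⟩ => ⟨h₁, h₂, h₃, h₄, h₅, h₆⟩,
      fun ⟨h₁, h₂, h₃, h₄, h₅, h₆⟩ => ⟨h₁, h₂, h₃, h₄, h₅, h₆⟩⟩

namespace IsCertificate

variable {a b c m p n : ℕ}

lemma exists_testBit_iff (h : IsCertificate a b c m p n) (j : ℕ) :
    (∃ d < a, (p ||| n).testBit (j + d)) ↔ j < m - a := by
  rw [← testBit_nonzeroRuns, h.nonzeroRuns_or, Nat.testBit_two_pow_sub_one, decide_eq_true_iff]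

lemma odd_termCount_add (h : IsCertificate a b c m p n) {i : ℕ} (hi : i < m) :
    Odd (termCount a b c p i + termCount a b c n i) := by
  rw [← termCount_or h.disjoint, ← testBit_oddTerms, h.oddTerms_or, Nat.testBit_two_pow_sub_one,
    decide_eq_true_iff]
  exact hi

lemma termCount_ne_three (h : IsCertificate a b c m p n) (i : ℕ) :
    termCount a b c p i ≠ 3 ∧ termCount a b c n i ≠ 3 := by
  simp [← testBit_threeTerms, h.threeTerms_left, h.threeTerms_right]

lemma termCount_add_eq_zero (h : IsCertificate a b c m p n) (hcb : c < b) (hba : b < a) {i : ℕ}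
    (hi : m ≤ i) : termCount a b c p i + termCount a b c n i = 0 := by
  have hzero {j : ℕ} (hj : m - a ≤ j) : (p ||| n).testBit j = false :=
    Bool.eq_false_iff.2 fun hbit =>
      hj.not_gt ((h.exists_testBit_iff j).1 ⟨0, by omega, hbit⟩)
  have hshift {k : ℕ} (hk : k ≤ a) : ((p ||| n) <<< k).testBit i = false := by
    rw [Nat.testBit_shiftLeft, hzero (by omega), Bool.and_false]
  rw [← termCount_or h.disjoint, termCount, hzero (by omega), hshift (by omega), hshift hba.le,
    hshift le_rfl]
  rfl

lemma isLittlewood_and_natDegree_eq (h : IsCertificate a b c m p n) (hcb : c < b) (hba : b < a) :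
    IsLittlewood (quadrinomial a b c * (bitPoly ℤ p - bitPoly ℤ n)) ∧
      (quadrinomial a b c * (bitPoly ℤ p - bitPoly ℤ n)).natDegree = m - 1 := by
  have hm := h.pos
  have hcoeff (i : ℕ) : (quadrinomial a b c * (bitPoly ℤ p - bitPoly ℤ n)).coeff i =
      termCount a b c p i - termCount a b c n i := by
    rw [mul_sub, coeff_sub, coeff_quadrinomial_mul_bitPoly, coeff_quadrinomial_mul_bitPoly]
  refine isLittlewood_and_natDegree_eq_of_coeff (fun i hi => ?_) fun i hi => ?_
  · have hodd := Nat.odd_iff.1 (h.odd_termCount_add (i := i) (by omega))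
    have hle := termCount_or (a := a) (b := b) (c := c) h.disjoint i ▸ termCount_le_four (p ||| n) i
    have hne := h.termCount_ne_three i
    rw [hcoeff]
    omega
  · have hzero := h.termCount_add_eq_zero hcb hba (i := i) (by omega)
    rw [hcoeff]
    omega

lemma odd_coeff_sub (h : IsCertificate a b c m p n) {i : ℕ} (hi : (p ||| n).testBit i) :
    Odd ((bitPoly ℤ p - bitPoly ℤ n).coeff i) := by
  have hsum := toNat_testBit_or h.disjoint i
  rw [hi, Bool.toNat_true] at hsum
  rw [coeff_sub, coeff_bitPoly, coeff_bitPoly, Int.odd_iff]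
  omega

lemma mdeg_quadrinomial (h : IsCertificate a b c m p n) (hcb : c < b) (hba : b < a) :
    mdeg (quadrinomial a b c) = m := by
  obtain ⟨hL, hdeg⟩ := h.isLittlewood_and_natDegree_eq hcb hba
  have hm := h.pos
  rw [hL.mdeg_mul_left_eq (monic_quadrinomial hcb hba), hdeg, Nat.sub_add_cancel hm]
  intro j hj
  rw [natDegree_quadrinomial hcb hba] at hj ⊢
  obtain ⟨d, hd, hbit⟩ := (h.exists_testBit_iff j).2 (by omega)
  exact ⟨d, hd, h.odd_coeff_sub hbit⟩

end IsCertificate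

/-- `f n`, arranged so that kernel reduction evaluates `n` to a numeral before it is substituted
into `f`. -/
def evalThen {α : Type*} (n : ℕ) (f : ℕ → α) : α :=
  match n with
  | 0 => f 0
  | k + 1 => f (k + 1)

lemma evalThen_eq {α : Type*} (n : ℕ) (f : ℕ → α) : evalThen n f = f n := by
  cases n <;> rfl

section Search

variable (a b c : ℕ)

/-- The first `2 ^ k` coefficients, for `k ≤ 14`, of the power series inverse of
`F = (X + 1) * (X ^ a + X ^ b + X ^ c + 1)` over the field with two elements, as the binary digits
of a number. -/
def invSeries : ℕ → ℕ
  | 0 => 1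
  | k + 1 =>
    -- `1 / F ≡ F ^ (2 ^ k - 1)` modulo `X ^ (2 ^ k)`, and `F ^ (2 ^ k)` is `F (X ^ (2 ^ k))`.
    evalThen (invSeries k) fun v =>
    evalThen (oddTerms (a <<< k) (b <<< k) (c <<< k) v) fun w =>
    (w ^^^ w <<< (2 ^ k)) % 2 ^ (2 ^ 14)

/-- A local search, in at most `k` rounds and starting from `p`, for a set of positive coefficients
among the nonzero coefficients marked by `u` such that no coefficient of the product with the
quadrinomial is `±3`. Each round flips one sign in all coefficients `±3` that have a term at the
offset, among `0, c, b, a`, selected by the pseudorandom number `k ^ 3 % 1019 % 4`. -/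
def searchSigns (u : ℕ) : ℕ → ℕ → ℕ
  | 0, p => p
  | k + 1, p =>
    evalThen (u ^^^ p) fun n =>
    evalThen (threeTerms a b c p ||| threeTerms a b c n) fun v =>
    match v with
    | 0 => p
    | _ + 1 =>
      evalThen (p ^^^ (v >>> [0, c, b, a].getD (k ^ 3 % 1019 % 4) 0 &&& u)) (searchSigns u k)

/-- Whether the search yields a certificate. The candidate for the period `m` of `invSeries` is the
end of its first run of `a` zeros. -/
def searchSucceeds : Bool :=
  evalThen (invSeries a b c 14) fun v =>
  evalThen (nonzeroRuns v a) fun z =>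
  evalThen (a + Nat.log2 (z ^^^ (z + 1))) fun m =>
  evalThen (v % 2 ^ m) fun u =>
  evalThen (searchSigns a b c u 1000 0) fun p =>
  evalThen (u ^^^ p) fun n =>
  decide (IsCertificate a b c m p n)

end Search

lemma exists_isCertificate_of_searchSucceeds {a b c : ℕ} (h : searchSucceeds a b c) :
    ∃ m p n, IsCertificate a b c m p n := by
  simp only [searchSucceeds, evalThen_eq] at h
  exact ⟨_, _, _, of_decide_eq_true h⟩

set_option maxHeartbeats 0 in
-- The kernel runs 364 searches on numbers of up to `2 ^ 14` binary digits.
lemma searchSucceeds_of_le_fourteen {a b c : ℕ} (hc : 0 < c) (hcb : c < b) (hba : b < a)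
    (ha : a ≤ 14) : searchSucceeds a b c := by
  interval_cases a <;> interval_cases b <;> interval_cases c <;> decide +kernel

theorem newman_quadrinomials_deg_le_14_minimal_littlewood_multiples
    (a b c : ℕ) (hc : 0 < c) (hcb : c < b) (hba : b < a) (ha : a ≤ 14) :
    (∃ L : Polynomial ℤ, IsLittlewood L ∧
        L.natDegree = mdeg (X ^ a + X ^ b + X ^ c + 1) - 1 ∧
        (X ^ a + X ^ b + X ^ c + 1 : Polynomial ℤ) ∣ L) ∧
    (∀ L : Polynomial ℤ, IsLittlewood L →
        (X ^ a + X ^ b + X ^ c + 1 : Polynomial ℤ) ∣ L →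
        mdeg (X ^ a + X ^ b + X ^ c + 1) - 1 ≤ L.natDegree) := by
  rw [← quadrinomial]
  refine ⟨?_, fun L hL hQ => Nat.sub_le_of_le_add (hL.mdeg_le hQ)⟩
  obtain ⟨m, p, n, h⟩ := exists_isCertificate_of_searchSucceeds
    (searchSucceeds_of_le_fourteen hc hcb hba ha)
  obtain ⟨hL, hdeg⟩ := h.isLittlewood_and_natDegree_eq hcb hba
  exact ⟨_, hL, by rw [hdeg, h.mdeg_quadrinomial hcb hba], dvd_mul_right _ _⟩
end

section
/- Every Borwein trinomial X^a + ε₁·X^b + ε₂, where a > b ≥ 1 are integers and ε₁, ε₂ ∈ {−1, 1}, divides some Littlewood polynomial. -/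
open Polynomial

/-!
Let `P` have end coefficients `±1` and coefficients of total absolute value at most `3`. Choosing
the coefficients of `Q` one at a time, one can keep all of them in `{-1, 0, 1}` while making the
coefficients of `P * Q` equal to `±1` up to any prescribed length `T`. Modulo `2` this leaves no
choice: `P * Q` agrees with `1 + X + ⋯ + X ^ (T - 1)` up to that length. As `P` mod `2` is monic
with nonzero constant term, `X` is a unit of the finite ring `𝔽₂[X] / ((X - 1) * P)`; if `T` is
its order, `P` divides this geometric sum modulo `2`, so `Q` is the cofactor modulo `2` and `P * Q`
equals the geometric sum there. The leading coefficient of `P * Q` being odd, `P * Q` has degree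
`T - 1` over `ℤ` as well.
-/

theorem isLittlewood_of_isUnit_coeff {L : ℤ[X]} (h : ∀ i ≤ L.natDegree, IsUnit (L.coeff i)) :
    IsLittlewood L :=
  ⟨leadingCoeff_ne_zero.mp (h _ le_rfl).ne_zero, fun i hi => Int.isUnit_iff.mp (h i hi)⟩

section GeomSum

theorem coeff_geom_sum_X {R : Type*} [Semiring R] (T n : ℕ) :
    (∑ i ∈ Finset.range T, (X : R[X]) ^ i).coeff n = if n < T then 1 else 0 := by
  simp [coeff_X_pow]

theorem degree_geom_sum_X_lt {R : Type*} [Semiring R] (T : ℕ) :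
    (∑ i ∈ Finset.range T, (X : R[X]) ^ i).degree < T :=
  (degree_lt_iff_coeff_zero _ _).mpr fun n hn => by rw [coeff_geom_sum_X, if_neg hn.not_gt]

variable {R : Type*} [CommRing R]

theorem exists_dvd_X_pow_sub_one_of_monic [Finite R] {f : R[X]} (hf : f.Monic)
    (h0 : IsUnit (f.coeff 0)) : ∃ T ≠ 0, f ∣ X ^ T - 1 := by
  have : Module.Finite R (AdjoinRoot f) := hf.finite_adjoinRoot
  have : Finite (AdjoinRoot f) := Module.finite_of_finite R
  have hroot : IsUnit (AdjoinRoot.root f) := by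
    have hdvd := map_dvd (AdjoinRoot.mk f) (X_dvd_sub_C (p := f))
    rw [map_sub, AdjoinRoot.mk_self, zero_sub, dvd_neg, AdjoinRoot.mk_X, AdjoinRoot.mk_C] at hdvd
    exact isUnit_of_dvd_unit hdvd (h0.map _)
  obtain ⟨T, hT, hpow⟩ := hroot.isOfFinOrder.exists_pow_eq_one
  refine ⟨T, hT.ne', AdjoinRoot.mk_eq_zero.mp ?_⟩
  rw [map_sub, map_pow, AdjoinRoot.mk_X, hpow, map_one, sub_self]

theorem exists_dvd_geom_sum_X_of_monic [Finite R] {f : R[X]} (hf : f.Monic)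
    (h0 : IsUnit (f.coeff 0)) : ∃ T ≠ 0, f ∣ ∑ i ∈ Finset.range T, X ^ i := by
  have hX : (X - 1 : R[X]).Monic := monic_X_sub_C 1
  have h0' : IsUnit (((X - 1) * f).coeff 0) := by simpa [mul_coeff_zero] using h0
  obtain ⟨T, hT, W, hW⟩ := exists_dvd_X_pow_sub_one_of_monic (hX.mul hf) h0'
  refine ⟨T, hT, W, hX.isRegular.left ?_⟩
  change (X - 1) * _ = (X - 1) * _
  rw [mul_geom_sum, hW, mul_assoc]

theorem mul_eq_of_dvd_of_coeff_eq [IsDomain R] {f g h : R[X]} {T : ℕ} (hf : f.coeff 0 ≠ 0)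
    (hfg : f ∣ g) (hg : g.degree < T) (hh : h.degree < T)
    (hcoeff : ∀ i < T, (f * h).coeff i = g.coeff i) : f * h = g := by
  obtain ⟨k, rfl⟩ := hfg
  have hf' : f ≠ 0 := fun hzero => hf (by rw [hzero, coeff_zero])
  have hk : k.degree < T := (degree_le_mul_left k hf').trans_lt (by rwa [mul_comm])
  have hdvd : X ^ T ∣ f * (h - k) := X_pow_dvd_iff.mpr fun i hi => by
    rw [mul_sub, coeff_sub, hcoeff i hi, sub_self]
  have hhk : h - k = 0 := by
    refine eq_zero_of_dvd_of_degree_lt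
      (prime_X.pow_dvd_of_dvd_mul_left T (mt X_dvd_iff.mp hf) hdvd) ?_
    rw [degree_X_pow]
    exact (degree_sub_le h k).trans_lt (max_lt hh hk)
  rw [sub_eq_zero.mp hhk]

end GeomSum

section SumAbsCoeff

variable {R : Type*} [Ring R] [LinearOrder R] [IsStrictOrderedRing R]

theorem abs_coeff_mul_le {P Q : R[X]} {M : R} (hQ : ∀ i, |Q.coeff i| ≤ M) (n : ℕ) :
    |(P * Q).coeff n| ≤ (∑ i ∈ P.support, |P.coeff i|) * M := by
  have hM : 0 ≤ M := (abs_nonneg _).trans (hQ 0)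
  calc |(P * Q).coeff n|
      = |∑ i ∈ P.support, (monomial i (P.coeff i) * Q).coeff n| := by
        rw [← finsetSum_coeff, ← Finset.sum_mul, ← as_sum_support]
    _ ≤ ∑ i ∈ P.support, |(monomial i (P.coeff i) * Q).coeff n| := Finset.abs_sum_le_sum_abs _ _
    _ ≤ ∑ i ∈ P.support, |P.coeff i| * M := by
        refine Finset.sum_le_sum fun i _ => ?_
        rw [← C_mul_X_pow_eq_monomial, mul_assoc, coeff_C_mul, coeff_X_pow_mul', abs_mul]
        gcongr
        split_ifs
        · exact hQ _
        · rwa [abs_zero]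
    _ = (∑ i ∈ P.support, |P.coeff i|) * M := (Finset.sum_mul ..).symm

theorem abs_coeff_mul_le_of_coeff_eq_zero {P Q : R[X]} {M : R} (hQ : ∀ i, |Q.coeff i| ≤ M)
    {n : ℕ} (hn : Q.coeff n = 0) :
    |(P * Q).coeff n| ≤ (∑ i ∈ P.support.erase 0, |P.coeff i|) * M := by
  have herase : (P * Q).coeff n = (P.erase 0 * Q).coeff n := by
    conv_lhs => rw [← monomial_add_erase P 0]
    rw [add_mul, coeff_add, monomial_zero_left, coeff_C_mul, hn, mul_zero, zero_add]
  rw [herase]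
  refine (abs_coeff_mul_le hQ n).trans_eq ?_
  rw [support_erase]
  congr 1
  exact Finset.sum_congr rfl fun i hi => by rw [erase_ne P (Finset.ne_of_mem_erase hi)]

end SumAbsCoeff

theorem isUnit_of_abs_le_one {n : ℤ} (h : |n| ≤ 1) (hn : n ≠ 0) : IsUnit n :=
  Int.isUnit_iff_abs_eq.mpr (h.antisymm (Int.one_le_abs hn))

theorem exists_abs_le_one_isUnit_add_mul {s c : ℤ} (hs : |s| ≤ 2) (hc : IsUnit c) :
    ∃ q, |q| ≤ 1 ∧ IsUnit (s + c * q) := by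
  obtain ⟨u, hu, hus⟩ : ∃ u : ℤ, IsUnit u ∧ |u - s| ≤ 1 := by
    rcases le_or_gt s 0 with hs0 | hs0
    · exact ⟨-1, isUnit_one.neg, by grind⟩
    · exact ⟨1, isUnit_one, by grind⟩
  refine ⟨c * (u - s), ?_, ?_⟩
  · rwa [abs_mul, Int.isUnit_iff_abs_eq.mp hc, one_mul]
  · rwa [← mul_assoc, Int.isUnit_mul_self hc, one_mul, add_sub_cancel]

theorem exists_degree_lt_isUnit_coeff_mul {P : ℤ[X]} (h0 : IsUnit (P.coeff 0))
    (hP : ∑ i ∈ P.support, |P.coeff i| ≤ 3) (T : ℕ) :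
    ∃ Q : ℤ[X], Q.degree < T ∧ (∀ i, |Q.coeff i| ≤ 1) ∧ ∀ i < T, IsUnit ((P * Q).coeff i) := by
  have hP' : ∑ i ∈ P.support.erase 0, |P.coeff i| ≤ 2 := by
    have h := Finset.sum_erase_add P.support (fun i => |P.coeff i|)
      (mem_support_iff.mpr h0.ne_zero)
    have h1 : |P.coeff 0| = 1 := Int.isUnit_iff_abs_eq.mp h0
    linarith
  induction T with
  | zero => exact ⟨0, by simp⟩
  | succ T ih =>
    obtain ⟨Q, hdeg, hQ, hunit⟩ := ih
    have hQT : ∀ i ≥ T, Q.coeff i = 0 := (degree_lt_iff_coeff_zero Q T).mp hdeg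
    have hs : |(P * Q).coeff T| ≤ 2 :=
      (abs_coeff_mul_le_of_coeff_eq_zero hQ (hQT T le_rfl)).trans (by rwa [mul_one])
    obtain ⟨q, hq, hqunit⟩ := exists_abs_le_one_isUnit_add_mul hs h0
    have hcoeff (i : ℕ) : (Q + C q * X ^ T).coeff i = if i = T then q else Q.coeff i := by
      rw [coeff_add, coeff_C_mul_X_pow]
      split_ifs with hi
      · rw [hi, hQT T le_rfl, zero_add]
      · rw [add_zero]
    refine ⟨Q + C q * X ^ T, ?_, fun i => ?_, fun i hi => ?_⟩
    · refine (degree_lt_iff_coeff_zero _ _).mpr fun i hi => ?_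
      rw [hcoeff, if_neg (by omega), hQT i (by omega)]
    · rw [hcoeff]
      split_ifs
      exacts [hq, hQ i]
    · rw [mul_add, ← mul_assoc, coeff_add, coeff_mul_X_pow', coeff_mul_C]
      rcases Nat.lt_succ_iff_lt_or_eq.mp hi with hi | rfl
      · rw [if_neg hi.not_ge, add_zero]
        exact hunit i hi
      · rwa [if_pos le_rfl, Nat.sub_self]

theorem borwein_trinomial_has_littlewood_multiple_general {P : ℤ[X]} (h0 : IsUnit (P.coeff 0))
    (hlead : IsUnit P.leadingCoeff) (hP : ∑ i ∈ P.support, |P.coeff i| ≤ 3) :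
    ∃ L : ℤ[X], IsLittlewood L ∧ P ∣ L := by
  let φ := Int.castRingHom (ZMod 2)
  have hmonic : (P.map φ).Monic := by
    rw [Monic, leadingCoeff_map_eq_of_isUnit_leadingCoeff φ hlead, (hlead.map φ).eq_one]
  have h0' : IsUnit ((P.map φ).coeff 0) := by
    rw [coeff_map]
    exact h0.map φ
  obtain ⟨T, hT, hdvd⟩ := exists_dvd_geom_sum_X_of_monic hmonic h0'
  obtain ⟨Q, hdeg, hQ, hunit⟩ := exists_degree_lt_isUnit_coeff_mul h0 hP T
  have hmap : (P * Q).map φ = ∑ i ∈ Finset.range T, X ^ i := by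
    rw [Polynomial.map_mul]
    refine mul_eq_of_dvd_of_coeff_eq h0'.ne_zero hdvd (degree_geom_sum_X_lt T)
      (degree_map_le.trans_lt hdeg) fun i hi => ?_
    rw [← Polynomial.map_mul, coeff_map, coeff_geom_sum_X, if_pos hi,
      ((hunit i hi).map φ).eq_one]
  have hPQ : P * Q ≠ 0 := fun h => by simpa [h] using hunit 0 (Nat.pos_of_ne_zero hT)
  have hleadPQ : IsUnit (P * Q).leadingCoeff := by
    rw [leadingCoeff_mul]
    have hQlead : Q.leadingCoeff ≠ 0 := leadingCoeff_ne_zero.mpr (right_ne_zero_of_mul hPQ)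
    exact hlead.mul (isUnit_of_abs_le_one (hQ _) hQlead)
  have hdegPQ : (P * Q).natDegree < T := by
    rw [natDegree_lt_iff_degree_lt hPQ, ← degree_map_eq_of_isUnit_leadingCoeff φ hleadPQ, hmap]
    exact degree_geom_sum_X_lt T
  exact ⟨P * Q, isLittlewood_of_isUnit_coeff fun i hi => hunit i (hi.trans_lt hdegPQ),
    dvd_mul_right P Q⟩

theorem sum_abs_coeff_trinomial {R : Type*} [Ring R] [Lattice R] {k m n : ℕ}
    (hkm : k < m) (hmn : m < n) {u v w : R} (hu : u ≠ 0) (hv : v ≠ 0) (hw : w ≠ 0) :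
    ∑ i ∈ (trinomial k m n u v w).support, |(trinomial k m n u v w).coeff i| =
      |u| + |v| + |w| := by
  rw [trinomial_support hkm hmn hu hv hw, Finset.sum_insert (by grind),
    Finset.sum_pair hmn.ne, trinomial_trailing_coeff' hkm hmn, trinomial_middle_coeff hkm hmn,
    trinomial_leading_coeff' hkm hmn, add_assoc]

theorem exists_isLittlewood_trinomial_dvd {m n : ℕ} (hm : 0 < m) (hmn : m < n) {u v w : ℤ}
    (hu : IsUnit u) (hv : IsUnit v) (hw : IsUnit w) :
    ∃ L : ℤ[X], IsLittlewood L ∧ trinomial 0 m n u v w ∣ L := by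
  refine borwein_trinomial_has_littlewood_multiple_general ?_ ?_ ?_
  · rwa [trinomial_trailing_coeff' hm hmn]
  · rwa [trinomial_leadingCoeff hm hmn hw.ne_zero]
  · rw [sum_abs_coeff_trinomial hm hmn hu.ne_zero hv.ne_zero hw.ne_zero]
    rw [Int.isUnit_iff_abs_eq] at hu hv hw
    rw [hu, hv, hw]
    norm_num

theorem borwein_trinomial_has_littlewood_multiple
    (a b : ℕ) (hb : 1 ≤ b) (hba : b < a)
    (ε₁ ε₂ : ℤ) (h₁ : ε₁ = 1 ∨ ε₁ = -1) (h₂ : ε₂ = 1 ∨ ε₂ = -1) :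
    ∃ L : Polynomial ℤ, IsLittlewood L ∧
      (X ^ a + C ε₁ * X ^ b + C ε₂ : Polynomial ℤ) ∣ L := by
  have hP : (X ^ a + C ε₁ * X ^ b + C ε₂ : ℤ[X]) = trinomial 0 b a ε₂ ε₁ 1 := by
    rw [trinomial_def, C_1]
    ring
  rw [hP]
  exact exists_isLittlewood_trinomial_dvd hb hba (Int.isUnit_iff.mpr h₂) (Int.isUnit_iff.mpr h₁)
    isUnit_one
end
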